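/- Let R be a one-dimensional commutative Noetherian local ring, and let M be a nonzero finitely generated R-module with depth_R(M) = 0 and finite injective dimension. Let K_0 = M, K_1, …, K_r be finitely generated R-modules together with positive integers a_i, b_i, n_i and short exact sequences 0 → K_{i-1}^{⊕a_i} → K_i → Ω^{n_i} K_{i-1}^{⊕b_i} → 0 for i = 1, …, r. Then for each i = 0, …, r there is an isomorphism K_i ≅ M^{⊕c_i} ⊕ L_i for some finitely generated R-module L_i and some integer c_i ≥ 1, where L_i is either zero or maximal Cohen–Macaulay; in particular, M is a direct summand of K_r. -/

import Mathlib

open CategoryTheory Pointwise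

universe u

variable (R : Type u) [CommRing R]

/-- `Ext^n_R(X, Y) = 0`. -/
def ExtVanish (X Y : Type u) [AddCommGroup X] [Module R X]
    [AddCommGroup Y] [Module R Y] (n : ℕ) : Prop :=
  Subsingleton (((Ext R (ModuleCat.{u} R) n).obj
    (Opposite.op (ModuleCat.of R X))).obj (ModuleCat.of R Y))

/-- A finitely generated module `X` is totally reflexive if the evaluation map to the
double dual is bijective and `Ext^i(X, R) = 0 = Ext^i(X^*, R)` for all `i ≥ 1`. -/
def IsTotallyReflexive (X : Type u) [AddCommGroup X] [Module R X] : Prop :=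
  Module.Finite R X ∧
  Function.Bijective (Module.Dual.eval R X) ∧
  (∀ i : ℕ, 1 ≤ i → ExtVanish R X R i) ∧
  (∀ i : ℕ, 1 ≤ i → ExtVanish R (Module.Dual R X) R i)

/-- `0 → A → B → C → 0` is a short exact sequence. -/
def IsShortExact {A B C : Type u} [AddCommGroup A] [Module R A] [AddCommGroup B] [Module R B]
    [AddCommGroup C] [Module R C] (f : A →ₗ[R] B) (g : B →ₗ[R] C) : Prop :=
  Function.Injective f ∧ Function.Surjective g ∧ Function.Exact f g

/-- Gorenstein dimension at most `n`: there is a resolution of length `≤ n`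
by totally reflexive modules. -/
def GdimLE : ℕ → ModuleCat.{u} R → Prop
  | 0, M => IsTotallyReflexive R M
  | n + 1, M => ∃ (X K : ModuleCat.{u} R) (f : K →ₗ[R] X) (g : X →ₗ[R] M),
      IsTotallyReflexive R X ∧ IsShortExact R f g ∧ GdimLE n K

/-- Projective dimension at most `n`. -/
def PdimLE : ℕ → ModuleCat.{u} R → Prop
  | 0, M => Module.Finite R M ∧ Module.Projective R M
  | n + 1, M => ∃ (X K : ModuleCat.{u} R) (f : K →ₗ[R] X) (g : X →ₗ[R] M),
      Module.Finite R X ∧ Module.Projective R X ∧ IsShortExact R f g ∧ PdimLE n K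

/-- Injective dimension at most `n`. -/
def InjdimLE : ℕ → ModuleCat.{u} R → Prop
  | 0, M => Module.Injective R M
  | n + 1, M => ∃ (I C : ModuleCat.{u} R) (f : M →ₗ[R] I) (g : I →ₗ[R] C),
      Module.Injective R I ∧ IsShortExact R f g ∧ InjdimLE n C

/-- The Gorenstein dimension, as an element of `ℕ∞`. -/
noncomputable def Gdim (M : ModuleCat.{u} R) : ℕ∞ :=
  sInf {n : ℕ∞ | ∃ m : ℕ, n = (m : ℕ∞) ∧ GdimLE R m M}

/-- The projective dimension, as an element of `ℕ∞`. -/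
noncomputable def Pdim (M : ModuleCat.{u} R) : ℕ∞ :=
  sInf {n : ℕ∞ | ∃ m : ℕ, n = (m : ℕ∞) ∧ PdimLE R m M}

/-- A local ring is Gorenstein if it has finite injective dimension over itself. -/
def IsGorensteinRing : Prop :=
  ∃ n : ℕ, InjdimLE R n (ModuleCat.of R R)

/-- `IsSyzygy R n S K` : `S` is an `n`-th syzygy of `K`, i.e. there is an exact sequence
`0 → S → F_{n-1} → ⋯ → F_0 → K → 0` with each `F_j` finitely generated free. -/
def IsSyzygy : ℕ → ModuleCat.{u} R → ModuleCat.{u} R → Prop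
  | 0, S, K => Nonempty (S ≃ₗ[R] K)
  | n + 1, S, K => ∃ (W F : ModuleCat.{u} R) (f : W →ₗ[R] F) (g : F →ₗ[R] K),
      Module.Free R F ∧ Module.Finite R F ∧ IsShortExact R f g ∧ IsSyzygy n S W

/-- One step in a reducing sequence: a short exact sequence
`0 → K^{⊕a} → L → (Ω^n K)^{⊕b} → 0`. -/
def ReducingStep (K L : ModuleCat.{u} R) (a b n : ℕ) : Prop :=
  ∃ (W : ModuleCat.{u} R) (f : (Fin a → K) →ₗ[R] L) (g : L →ₗ[R] (Fin b → W)),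
    IsSyzygy R n W K ∧ IsShortExact R f g

/-- `M` admits a reducing sequence `K_0 = M, K_1, …, K_r` relative to the property `P`,
that is, short exact sequences `0 → K_{i-1}^{⊕a_i} → K_i → (Ω^{n_i}K_{i-1})^{⊕b_i} → 0`
with `a_i, b_i, n_i ≥ 1` and `P (K_r)`. -/
def HasReducingSeq (P : ModuleCat.{u} R → Prop) (M : ModuleCat.{u} R) (r : ℕ) : Prop :=
  ∃ (K : Fin (r + 1) → ModuleCat.{u} R) (a b n : Fin r → ℕ),
    K 0 = M ∧ (∀ i, Module.Finite R (K i)) ∧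
    (∀ i : Fin r, 1 ≤ a i ∧ 1 ≤ b i ∧ 1 ≤ n i ∧
      ReducingStep R (K i.castSucc) (K i.succ) (a i) (b i) (n i)) ∧
    P (K (Fin.last r))

/-- The reducing invariant attached to the finiteness property `P`. -/
noncomputable def ReducingDim (P : ModuleCat.{u} R → Prop) (M : ModuleCat.{u} R) : ℕ∞ :=
  sInf {n : ℕ∞ | ∃ r : ℕ, n = (r : ℕ∞) ∧ HasReducingSeq R P M r}

/-- The reducing Gorenstein dimension. -/
noncomputable def rGdim (M : ModuleCat.{u} R) : ℕ∞ :=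
  ReducingDim R (fun N => ∃ m : ℕ, GdimLE R m N) M

/-- The reducing projective dimension. -/
noncomputable def rPdim (M : ModuleCat.{u} R) : ℕ∞ :=
  ReducingDim R (fun N => ∃ m : ℕ, PdimLE R m N) M

/-- depth of a module over a local ring: `inf { i | Ext^i(k, M) ≠ 0 }`. -/
noncomputable def depth [IsLocalRing R] (M : ModuleCat.{u} R) : ℕ∞ :=
  sInf {n : ℕ∞ | ∃ i : ℕ, n = (i : ℕ∞) ∧
    ¬ ExtVanish R (R ⧸ IsLocalRing.maximalIdeal R) M i}

/-- maximal Cohen-Macaulay: depth equals the Krull dimension of the ring. -/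
def IsMCM [IsLocalRing R] (M : ModuleCat.{u} R) : Prop :=
  (depth R M : WithBot ℕ∞) = ringKrullDim R

/-- torsion-free: every non zero-divisor of `R` is a non zero-divisor on `M`. -/
def IsTorsionFreeModule (M : Type u) [AddCommGroup M] [Module R M] : Prop :=
  ∀ r ∈ nonZeroDivisors R, ∀ m : M, r • m = 0 → m = 0

section ExtPart

variable {R}

/-- vanishing of the derived-category `Ext`. -/
def EV (R : Type u) [CommRing R] (X Y : Type u) [AddCommGroup X] [Module R X]
    [AddCommGroup Y] [Module R Y] (n : ℕ) : Prop :=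
  Subsingleton (Abelian.Ext (ModuleCat.of R X) (ModuleCat.of R Y) n)

/-- the short complex attached to a short exact sequence of linear maps. -/
abbrev seqOf {A B C : Type u} [AddCommGroup A] [Module R A] [AddCommGroup B] [Module R B]
    [AddCommGroup C] [Module R C] {f : A →ₗ[R] B} {g : B →ₗ[R] C} (h : IsShortExact R f g) :
    ShortComplex (ModuleCat.{u} R) :=
  ShortComplex.mk (X₁ := ModuleCat.of R A) (X₂ := ModuleCat.of R B) (X₃ := ModuleCat.of R C)
    (ModuleCat.ofHom f) (ModuleCat.ofHom g) (by
      ext a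
      exact (h.2.2 (f a)).2 ⟨a, rfl⟩)

lemma seqOf_shortExact {A B C : Type u} [AddCommGroup A] [Module R A] [AddCommGroup B] [Module R B]
    [AddCommGroup C] [Module R C] {f : A →ₗ[R] B} {g : B →ₗ[R] C} (h : IsShortExact R f g) :
    (seqOf h).ShortExact :=
  ModuleCat.shortComplex_shortExact _ h.2.2 h.1 h.2.1

section les
variable {A B C Y : Type u} [AddCommGroup A] [Module R A] [AddCommGroup B] [Module R B]
    [AddCommGroup C] [Module R C] [AddCommGroup Y] [Module R Y]
    {f : A →ₗ[R] B} {g : B →ₗ[R] C}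

lemma EV.mid (h : IsShortExact R f g) {n : ℕ} (hA : EV R A Y n) (hC : EV R C Y n) :
    EV R B Y n := by
  refine subsingleton_of_forall_eq 0 fun x => ?_
  obtain ⟨y, hy⟩ := Abelian.Ext.contravariant_sequence_exact₂ (seqOf_shortExact h)
    (ModuleCat.of R Y) x (hA.elim _ _)
  rw [← hy, hC.elim y 0]
  simp

lemma EV.left (h : IsShortExact R f g) {n : ℕ} (hB : EV R B Y n) (hC : EV R C Y (n + 1)) :
    EV R A Y n := by
  refine subsingleton_of_forall_eq 0 fun x => ?_
  obtain ⟨y, hy⟩ := Abelian.Ext.contravariant_sequence_exact₁ (seqOf_shortExact h)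
    (ModuleCat.of R Y) x (add_comm 1 n) (hC.elim _ _)
  rw [← hy, hB.elim y 0]
  simp

lemma EV.right (h : IsShortExact R f g) {n : ℕ} (hA : EV R A Y n) (hB : EV R B Y (n + 1)) :
    EV R C Y (n + 1) := by
  refine subsingleton_of_forall_eq 0 fun x => ?_
  obtain ⟨y, hy⟩ := Abelian.Ext.contravariant_sequence_exact₃ (seqOf_shortExact h)
    (ModuleCat.of R Y) x (hB.elim _ _) (add_comm 1 n)
  rw [← hy, hA.elim y 0]
  simp

lemma EV.extend (h : IsShortExact R f g) (hC : EV R C Y 1) (φ : A →ₗ[R] Y) :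
    ∃ ψ : B →ₗ[R] Y, ψ ∘ₗ f = φ := by
  obtain ⟨y, hy⟩ := Abelian.Ext.contravariant_sequence_exact₁ (seqOf_shortExact h)
    (ModuleCat.of R Y) (n₀ := 0) (Abelian.Ext.mk₀ (ModuleCat.ofHom φ)) (n₁ := 1) rfl (hC.elim _ _)
  obtain ⟨ψ, rfl⟩ := Abelian.Ext.addEquiv₀.symm.surjective y
  refine ⟨ψ.hom, ?_⟩
  have h2 : Abelian.Ext.mk₀ ((seqOf h).f ≫ ψ) = Abelian.Ext.mk₀ (ModuleCat.ofHom φ) := by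
    rw [← hy, ← Abelian.Ext.mk₀_comp_mk₀]; rfl
  have h3 := Abelian.Ext.addEquiv₀.symm.injective h2
  exact congrArg ModuleCat.Hom.hom h3

lemma EV.iso (e : A ≃ₗ[R] B) {n : ℕ} (hA : EV R A Y n) : EV R B Y n := by
  refine subsingleton_of_forall_eq 0 fun x => ?_
  have h1 : (Abelian.Ext.mk₀ e.toModuleIso.hom).comp x (zero_add n) = 0 := hA.elim _ _
  have h2 : (Abelian.Ext.mk₀ e.toModuleIso.inv).comp
    ((Abelian.Ext.mk₀ e.toModuleIso.hom).comp x (zero_add n)) (zero_add n) = x := by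
    rw [Abelian.Ext.mk₀_comp_mk₀_assoc, Iso.inv_hom_id, Abelian.Ext.mk₀_id_comp]
  rw [← h2, h1]; simp

lemma EV.free [Module.Free R A] (n : ℕ) : EV R A Y (n + 1) :=
  haveI : Projective (ModuleCat.of R A) := (IsProjective.iff_projective A).1 inferInstance
  subsingleton_of_forall_eq 0 Abelian.Ext.eq_zero_of_projective

lemma EV.subsing [Subsingleton A] (n : ℕ) : EV R A Y n := by
  rcases n with _ | n
  · refine subsingleton_of_forall_eq 0 fun x => ?_
    obtain ⟨ψ, rfl⟩ := Abelian.Ext.addEquiv₀.symm.surjective x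
    have : ψ = 0 := (ModuleCat.isZero_of_subsingleton (ModuleCat.of R A)).eq_of_src _ _
    rw [this, map_zero]
  · have : Module.Free R A := Module.Free.of_subsingleton R A
    exact EV.free n

lemma EV.zero_iff : EV R A Y 0 ↔ ∀ φ : A →ₗ[R] Y, φ = 0 := by
  constructor
  · intro h φ
    have := Abelian.Ext.addEquiv₀.symm.injective (h.elim
      (Abelian.Ext.addEquiv₀.symm (ModuleCat.ofHom φ)) (Abelian.Ext.addEquiv₀.symm 0))
    exact congrArg ModuleCat.Hom.hom this
  · intro h
    refine subsingleton_of_forall_eq 0 fun x => ?_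
    obtain ⟨ψ, rfl⟩ := Abelian.Ext.addEquiv₀.symm.surjective x
    have : ψ = 0 := ModuleCat.hom_ext (h ψ.hom)
    rw [this, map_zero]

lemma EV.nak [IsNoetherianRing R] [IsLocalRing R] [Module.Finite R A] [Module.Finite R Y]
    (x : R) (hx : x ∈ IsLocalRing.maximalIdeal R) {g : A →ₗ[R] C}
    (h : IsShortExact R (x • LinearMap.id : A →ₗ[R] A) g) {n : ℕ}
    (hC : EV R C Y (n + 1)) : EV R A Y n := by
  have key : ∀ e : Abelian.Ext (ModuleCat.of R A) (ModuleCat.of R Y) n, ∃ e', x • e' = e := by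
    intro e
    obtain ⟨y, hy⟩ := Abelian.Ext.contravariant_sequence_exact₁ (seqOf_shortExact h)
      (ModuleCat.of R Y) e (add_comm 1 n) (hC.elim _ _)
    refine ⟨y, ?_⟩
    rw [← hy]
    have : (seqOf h).f = x • 𝟙 (ModuleCat.of R A) := rfl
    rw [this, Abelian.Ext.mk₀_smul, Abelian.Ext.smul_comp]
    congr 1
    exact (Abelian.Ext.mk₀_id_comp y).symm
  have fin : Module.Finite R (Abelian.Ext (ModuleCat.of R A) (ModuleCat.of R Y) n) := inferInstance
  have := Submodule.eq_bot_of_le_smul_of_le_jacobson_bot (IsLocalRing.maximalIdeal R)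
    (⊤ : Submodule R (Abelian.Ext (ModuleCat.of R A) (ModuleCat.of R Y) n)) fin.fg_top
    (fun e _ => by
      obtain ⟨e', rfl⟩ := key e
      exact Submodule.smul_mem_smul hx trivial)
    (IsLocalRing.maximalIdeal_le_jacobson _)
  exact subsingleton_of_forall_eq 0 fun e => (Submodule.mem_bot R).1 (this ▸ trivial)

end les

lemma EV_of_injdim (m : ℕ) : ∀ (Y : ModuleCat.{u} R), InjdimLE R m Y →
    ∀ (A : Type u) [AddCommGroup A] [Module R A] (n : ℕ), m < n → EV R A Y n := by
  induction m with
  | zero =>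
    intro Y hY A _ _ n hn
    obtain ⟨n, rfl⟩ : ∃ k, n = k + 1 := ⟨n - 1, by omega⟩
    have hY' : Module.Injective R Y := hY
    have : Injective (ModuleCat.of R Y) := (Module.injective_iff_injective_object R Y).1 hY'
    exact subsingleton_of_forall_eq 0 Abelian.Ext.eq_zero_of_injective
  | succ m ih =>
    rintro Y ⟨I, C, f, g, hI, hs, hC⟩ A _ _ n hn
    obtain ⟨n, rfl⟩ : ∃ k, n = k + 1 := ⟨n - 1, by omega⟩
    have : Injective (ModuleCat.of R I) := (Module.injective_iff_injective_object R I).1 hI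
    refine subsingleton_of_forall_eq 0 fun x => ?_
    obtain ⟨y, hy⟩ := Abelian.Ext.covariant_sequence_exact₁ (ModuleCat.of R A)
      (seqOf_shortExact hs) x (Abelian.Ext.eq_zero_of_injective (I := ModuleCat.of R I) _) rfl
    have h0 : y = 0 := (ih C hC A n (by omega)).elim _ _
    rw [← hy, h0]
    simp

end ExtPart
section RingPart

variable {R} [IsNoetherianRing R] [IsLocalRing R]

open IsLocalRing

lemma exists_emb {N : Type u} [AddCommGroup N] [Module R N] [Nontrivial N]
    (h : ∀ p : Ideal R, p.IsPrime → Module.annihilator R N ≤ p → p = maximalIdeal R) :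
    ∃ y : N, y ≠ 0 ∧ ∀ r ∈ maximalIdeal R, r • y = 0 := by
  obtain ⟨p, hp⟩ := associatedPrimes.nonempty R N
  rw [AssociatedPrimes.mem_iff, isAssociatedPrime_iff] at hp
  obtain ⟨hp, y, hy⟩ := hp
  have hpm : p = maximalIdeal R := by
    refine h p hp fun r hr => ?_
    rw [hy, Submodule.mem_colon_singleton, Submodule.mem_bot]
    exact Module.mem_annihilator.1 hr y
  refine ⟨y, ?_, fun r hr => ?_⟩
  · rintro rfl
    apply hp.ne_top
    rw [hy, Ideal.eq_top_iff_one, Submodule.mem_colon_singleton]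
    simp
  · rw [← hpm, hy, Submodule.mem_colon_singleton, Submodule.mem_bot] at hr
    exact hr

/-- the embedding of the residue field given by a socle element. -/
lemma socle_emb {N : Type u} [AddCommGroup N] [Module R N] {y : N} (hy : y ≠ 0)
    (hm : ∀ r ∈ maximalIdeal R, r • y = 0) :
    ∃ f : (R ⧸ maximalIdeal R) →ₗ[R] N, Function.Injective f := by
  have hk : maximalIdeal R = LinearMap.ker (LinearMap.toSpanSingleton R N y) := by
    refine le_antisymm (fun r hr => by simpa using hm r hr) fun r hr => ?_
    rw [LinearMap.mem_ker, LinearMap.toSpanSingleton_apply] at hr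
    by_contra hr'
    have hu : IsUnit r := by simpa using hr'
    exact hy (by simpa using (hu.smul_eq_zero).1 hr)
  refine ⟨(maximalIdeal R).liftQ (LinearMap.toSpanSingleton R N y) hk.le, ?_⟩
  rw [← LinearMap.ker_eq_bot]
  exact Submodule.ker_liftQ_eq_bot _ _ _ hk.ge

lemma quot_shortExact {A B : Type u} [AddCommGroup A] [Module R A] [AddCommGroup B] [Module R B]
    (f : A →ₗ[R] B) (hf : Function.Injective f) :
    IsShortExact R f (LinearMap.range f).mkQ :=
  ⟨hf, Submodule.mkQ_surjective _, LinearMap.exact_map_mkQ_range f⟩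

/-- multiplication by an element outside a prime. -/
lemma prime_step (M : Type u) [AddCommGroup M] [Module R M] [Module.Finite R M]
    (p : Ideal R) (hp : p.IsPrime) (hpm : p ≠ maximalIdeal R) (n : ℕ)
    (H : ∀ (A : Type u) [AddCommGroup A] [Module R A] [Module.Finite R A], EV R A M (n + 1)) :
    EV R (R ⧸ p) M n := by
  obtain ⟨x, hxm, hxp⟩ : ∃ x ∈ maximalIdeal R, x ∉ p := by
    by_contra! hcon
    exact hpm (le_antisymm (le_maximalIdeal hp.ne_top) hcon)
  have hinj : Function.Injective (x • LinearMap.id : (R ⧸ p) →ₗ[R] (R ⧸ p)) := by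
    rw [← LinearMap.ker_eq_bot, LinearMap.ker_eq_bot']
    intro q hq
    obtain ⟨q, rfl⟩ := Ideal.Quotient.mk_surjective q
    have : Ideal.Quotient.mk p (x * q) = 0 := hq
    rw [Ideal.Quotient.eq_zero_iff_mem] at this ⊢
    exact (hp.mem_or_mem this).resolve_left hxp
  exact EV.nak x hxm (quot_shortExact _ hinj) (H _)

lemma descend (M : Type u) [AddCommGroup M] [Module R M] [Module.Finite R M] (n : ℕ)
    (H : ∀ (A : Type u) [AddCommGroup A] [Module R A] [Module.Finite R A], EV R A M (n + 1))
    (hk : EV R (R ⧸ maximalIdeal R) M n) :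
    ∀ (A : Type u) [AddCommGroup A] [Module R A] [Module.Finite R A], EV R A M n := by
  intro A _ _ hA
  induction hA using IsNoetherianRing.induction_on_isQuotientEquivQuotientPrime R with
  | subsingleton N => exact EV.subsing n
  | quotient N p e =>
    refine EV.iso e.symm ?_
    by_cases h : p.1 = maximalIdeal R
    · rw [h]; exact hk
    · exact prime_step M p.1 p.2 h n H
  | exact N₁ N₂ N₃ f g hf hg hfg h₁ h₃ => exact EV.mid ⟨hf, hg, hfg⟩ h₁ h₃

lemma descend_to (M : Type u) [AddCommGroup M] [Module R M] [Module.Finite R M] (n m : ℕ)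
    (H : ∀ (A : Type u) [AddCommGroup A] [Module R A] (j : ℕ), m < j → EV R A M j)
    (step : ∀ j, n ≤ j → (∀ (A : Type u) [AddCommGroup A] [Module R A] [Module.Finite R A],
      EV R A M (j + 1)) → EV R (R ⧸ maximalIdeal R) M j) :
    ∀ (A : Type u) [AddCommGroup A] [Module R A] [Module.Finite R A], EV R A M n := by
  have : ∀ d j, n ≤ j → m + 1 ≤ j + d →
      ∀ (A : Type u) [AddCommGroup A] [Module R A] [Module.Finite R A], EV R A M j := by
    intro d
    induction d with
    | zero => intro j _ hj A _ _ _; exact H A j (by omega)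
    | succ d ih =>
      intro j hj hj'
      have h1 : ∀ (A : Type u) [AddCommGroup A] [Module R A] [Module.Finite R A],
        EV R A M (j + 1) := ih (j + 1) (by omega) (by omega)
      exact descend M j h1 (step j hj h1)
  exact this (m + 1) n le_rfl (by omega)

lemma prime_eq_max (hd : ringKrullDim R = 1) {x : R} (hx : x ∈ nonZeroDivisors R)
    (p : Ideal R) (hp : p.IsPrime) (hxp : x ∈ p) : p = maximalIdeal R := by
  have h1 : Ring.KrullDimLE 1 R := by
    rw [Ring.krullDimLE_iff]; simp [hd]
  rcases Ring.krullDimLE_one_iff.1 h1 p hp with h | h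
  · exact absurd hx (Set.disjoint_left.1 (Ideal.disjoint_nonZeroDivisors_of_mem_minimalPrimes h) hxp)
  · exact eq_maximalIdeal h

lemma exists_nonmax (hd : ringKrullDim R = 1) :
    ∃ p : Ideal R, p.IsPrime ∧ p ≠ maximalIdeal R := by
  by_contra! hcon
  have : Ring.KrullDimLE 0 R := Ring.KrullDimLE.mk₀ fun I hI => by
    rw [hcon I hI]; infer_instance
  rw [Ring.krullDimLE_iff, hd] at this
  exact absurd this (by decide)

lemma exists_regular (hd : ringKrullDim R = 1)
    (M : Type u) [AddCommGroup M] [Module R M] [Module.Finite R M] [Nontrivial M] (m : ℕ)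
    (H : ∀ (A : Type u) [AddCommGroup A] [Module R A] (j : ℕ), m < j → EV R A M j) :
    ∃ x ∈ maximalIdeal R, x ∈ nonZeroDivisors R := by
  by_contra! hcon
  have hdis : Disjoint (maximalIdeal R : Set R) (nonZeroDivisors R) :=
    Set.disjoint_left.2 hcon
  obtain ⟨y, hy, hym⟩ : ∃ y : R, y ≠ 0 ∧ ∀ r ∈ maximalIdeal R, r • y = 0 := by
    obtain ⟨y, hy, hy0⟩ := SetLike.exists_of_lt
      (Ideal.bot_lt_annihilator_of_disjoint_nonZeroDivisors hdis)
    refine ⟨y, fun h => hy0 (by simp [h]), fun r hr => ?_⟩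
    have := congrArg Subtype.val (Module.mem_annihilator.1 hy ⟨r, hr⟩)
    simpa [mul_comm] using this
  obtain ⟨f, hf⟩ := socle_emb hy hym
  have h0 := descend_to M 0 m H (fun j _ hj => by
    rcases j with _ | j
    · obtain ⟨p, hp, hpm⟩ := exists_nonmax hd
      have := EV.zero_iff.1 (prime_step M p hp hpm 0 hj)
      refine EV.zero_iff.2 fun φ => ?_
      have h2 := this (φ ∘ₗ (Submodule.factor (le_maximalIdeal hp.ne_top) :
        (R ⧸ p) →ₗ[R] (R ⧸ maximalIdeal R)))
      ext
      have := LinearMap.congr_fun h2 (Submodule.Quotient.mk 1)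
      simpa using this
    · exact EV.left (quot_shortExact f hf) (EV.free j) (hj _)) M
  have := EV.zero_iff.1 h0 LinearMap.id
  obtain ⟨y, hy⟩ := exists_ne (0 : M)
  exact hy (LinearMap.congr_fun this y)

lemma ext_two (hd : ringKrullDim R = 1)
    (M : Type u) [AddCommGroup M] [Module R M] [Module.Finite R M] (m : ℕ)
    (H : ∀ (A : Type u) [AddCommGroup A] [Module R A] (j : ℕ), m < j → EV R A M j)
    {x : R} (hxm : x ∈ maximalIdeal R) (hx : x ∈ nonZeroDivisors R) :
    ∀ (A : Type u) [AddCommGroup A] [Module R A] [Module.Finite R A], EV R A M 2 := by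
  refine descend_to M 2 m H fun j hj hj1 => ?_
  obtain ⟨j, rfl⟩ : ∃ i, j = i + 2 := ⟨j - 2, by omega⟩
  have hinj : Function.Injective (x • LinearMap.id : R →ₗ[R] R) := by
    rw [← LinearMap.ker_eq_bot, LinearMap.ker_eq_bot']
    intro q hq
    exact (mem_nonZeroDivisors_iff.1 hx).1 q hq
  set N := R ⧸ LinearMap.range (x • LinearMap.id : R →ₗ[R] R) with hN
  have hNx : EV R N M (j + 2) := EV.right (quot_shortExact _ hinj) (EV.free j) (EV.free (j + 1))
  have : Nontrivial N := by
    rw [hN, Submodule.Quotient.nontrivial_iff]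
    intro h
    obtain ⟨y, hy⟩ : (1 : R) ∈ LinearMap.range (x • LinearMap.id : R →ₗ[R] R) := h ▸ trivial
    exact (mem_maximalIdeal x).1 hxm (IsUnit.of_mul_eq_one y hy)
  obtain ⟨y, hy, hym⟩ := exists_emb (R := R) (N := N) (fun p hp hle => by
    refine prime_eq_max hd hx p hp (hle (Module.mem_annihilator.2 fun q => ?_))
    obtain ⟨q, rfl⟩ := Submodule.Quotient.mk_surjective _ q
    rw [← Submodule.Quotient.mk_smul, Submodule.Quotient.mk_eq_zero]
    exact ⟨q, rfl⟩)
  obtain ⟨f, hf⟩ := socle_emb hy hym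
  exact EV.left (quot_shortExact f hf) hNx (hj1 _)

lemma extVanish_iff {X Y : Type u} [AddCommGroup X] [Module R X] [AddCommGroup Y] [Module R Y]
    (P : ProjectiveResolution (ModuleCat.of R X)) (n : ℕ) :
    ExtVanish R X Y n ↔ (P.complex.linearYonedaObj R (ModuleCat.of R Y)).ExactAt n := by
  rw [HomologicalComplex.exactAt_iff_isZero_homology, ← (P.isoExt n (ModuleCat.of R Y)).isZero_iff,
    ModuleCat.isZero_iff_subsingleton]
  rfl

lemma depth_lemma (hd : ringKrullDim R = 1) {x : R} (hxm : x ∈ maximalIdeal R)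
    (hx : x ∈ nonZeroDivisors R) (L : Type u) [AddCommGroup L] [Module R L] [Module.Finite R L]
    [Nontrivial L] (hL : ∀ l : L, x • l = 0 → l = 0) : IsMCM R (ModuleCat.of R L) := by
  obtain ⟨P⟩ : Nonempty (ProjectiveResolution (ModuleCat.of R (R ⧸ maximalIdeal R))) :=
    HasProjectiveResolution.out
  let d10 : P.complex.X 1 →ₗ[R] P.complex.X 0 := (P.complex.d 1 0).hom
  let d21 : P.complex.X 2 →ₗ[R] P.complex.X 1 := (P.complex.d 2 1).hom
  let π : P.complex.X 0 →ₗ[R] (R ⧸ maximalIdeal R) := (P.π.f 0).hom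
  have hπ : Function.Surjective π :=
    (ModuleCat.epi_iff_surjective (P.π.f 0)).1 inferInstance
  have hex : ∀ p, π p = 0 → ∃ q, d10 q = p :=
    (ShortComplex.moduleCat_exact_iff _).1 P.exact₀
  have hπd : ∀ q, π (d10 q) = 0 := fun q =>
    LinearMap.congr_fun (congrArg ModuleCat.Hom.hom P.complex_d_comp_π_f_zero) q
  have hdd : ∀ q, d10 (d21 q) = 0 := fun q =>
    LinearMap.congr_fun (congrArg ModuleCat.Hom.hom (P.complex.d_comp_d 2 1 0)) q
  have hproj : Module.Projective R (P.complex.X 0) :=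
    (IsProjective.iff_projective (P.complex.X 0)).2 (P.projective 0)
  have hkill : ∀ (r : R), r ∈ maximalIdeal R → ∀ p, ∃ q, d10 q = r • p := by
    intro r hr p
    refine hex _ ?_
    rw [map_smul]
    obtain ⟨s, hs⟩ := Ideal.Quotient.mk_surjective (π p)
    rw [← hs]
    change Ideal.Quotient.mk _ (r * s) = 0
    exact Ideal.Quotient.eq_zero_iff_mem.2 (Ideal.mul_mem_right _ _ hr)
  have hzero : ∀ φ : P.complex.X 0 →ₗ[R] L, (∀ q, φ (d10 q) = 0) → ∀ p, φ p = 0 := by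
    intro φ hφ p
    obtain ⟨q, hq⟩ := hkill x hxm p
    apply hL
    rw [← map_smul, ← hq, hφ]
  have h0 : ExtVanish R (R ⧸ maximalIdeal R) L 0 := by
    rw [extVanish_iff P, HomologicalComplex.exactAt_iff' _ 0 0 1 (by simp) (by simp),
      ShortComplex.moduleCat_exact_iff]
    intro (φ : P.complex.X 0 ⟶ ModuleCat.of R L) hφ
    refine ⟨0, ?_⟩
    rw [map_zero]
    have h2 : P.complex.d 1 0 ≫ φ = 0 := hφ
    refine (ModuleCat.hom_ext (LinearMap.ext fun p => ?_) : (0 : P.complex.X 0 ⟶ ModuleCat.of R L) = φ)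
    exact (hzero φ.hom (fun q => LinearMap.congr_fun (congrArg ModuleCat.Hom.hom h2) q) p).symm
  have h1 : ¬ ExtVanish R (R ⧸ maximalIdeal R) L 1 := by
    rw [extVanish_iff P, HomologicalComplex.exactAt_iff' _ 0 1 2 (by simp) (by simp),
      ShortComplex.moduleCat_exact_iff]
    intro hcon
    have hcon' : ∀ χ : P.complex.X 1 →ₗ[R] L, (∀ q, χ (d21 q) = 0) →
        ∃ ψ : P.complex.X 0 →ₗ[R] L, ∀ q, ψ (d10 q) = χ q := by
      intro χ hχ
      have hz : P.complex.d 2 1 ≫ (ModuleCat.ofHom χ : P.complex.X 1 ⟶ ModuleCat.of R L) = 0 :=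
        ModuleCat.hom_ext (LinearMap.ext hχ)
      obtain ⟨ψ, hψ⟩ := hcon (ModuleCat.ofHom χ : P.complex.X 1 ⟶ ModuleCat.of R L) hz
      have hψ' : P.complex.d 1 0 ≫ (ψ : P.complex.X 0 ⟶ ModuleCat.of R L) =
        ModuleCat.ofHom χ := hψ
      exact ⟨ModuleCat.Hom.hom (ψ : P.complex.X 0 ⟶ ModuleCat.of R L),
        fun q => LinearMap.congr_fun (congrArg ModuleCat.Hom.hom hψ') q⟩
    let m : L →ₗ[R] L := x • LinearMap.id
    have hm : Function.Injective m := by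
      rw [← LinearMap.ker_eq_bot, LinearMap.ker_eq_bot']
      exact hL
    have : Nontrivial (L ⧸ LinearMap.range m) := by
      rw [Submodule.Quotient.nontrivial_iff]
      intro h
      have hbot := Submodule.eq_bot_of_le_smul_of_le_jacobson_bot (maximalIdeal R)
        (⊤ : Submodule R L) (Module.Finite.fg_top)
        (fun e _ => by
          obtain ⟨e', rfl⟩ : e ∈ LinearMap.range m := h ▸ trivial
          exact Submodule.smul_mem_smul hxm trivial)
        (IsLocalRing.maximalIdeal_le_jacobson _)
      exact bot_ne_top hbot.symm
    obtain ⟨y, hy, hym⟩ := exists_emb (R := R) (N := L ⧸ LinearMap.range m) (fun p hp hle => by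
      refine prime_eq_max hd hx p hp (hle (Module.mem_annihilator.2 fun q => ?_))
      obtain ⟨q, rfl⟩ := Submodule.Quotient.mk_surjective _ q
      rw [← Submodule.Quotient.mk_smul, Submodule.Quotient.mk_eq_zero]
      exact ⟨q, rfl⟩)
    obtain ⟨f, hf⟩ := socle_emb hy hym
    obtain ⟨φ, hφ⟩ := Module.projective_lifting_property (LinearMap.range m).mkQ (f ∘ₗ π)
      (Submodule.mkQ_surjective _)
    have hr : ∀ q, φ (d10 q) ∈ LinearMap.range m := fun q => by
      rw [← Submodule.Quotient.mk_eq_zero]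
      have := LinearMap.congr_fun hφ (d10 q)
      simpa [hπd] using this
    let e := LinearEquiv.ofInjective m hm
    let χ : P.complex.X 1 →ₗ[R] L := e.symm.toLinearMap ∘ₗ (φ ∘ₗ d10).codRestrict _ hr
    have hχ : ∀ q, x • χ q = φ (d10 q) := fun q =>
      congrArg Subtype.val (e.apply_symm_apply ⟨φ (d10 q), hr q⟩)
    obtain ⟨ψ, hψ⟩ := hcon' χ (fun q => hL _ (by rw [hχ, hdd, map_zero]))
    have hfin : ∀ p, (φ - x • ψ) p = 0 := hzero _ (fun q => by
      simp [hψ, hχ])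
    obtain ⟨p, hp⟩ := hπ 1
    have hp1 : φ p = m (ψ p) := sub_eq_zero.1 (hfin p)
    have hp2 : f (π p) = 0 := by
      have := LinearMap.congr_fun hφ p
      rw [LinearMap.comp_apply, LinearMap.comp_apply, hp1] at this
      rw [← this, Submodule.mkQ_apply, Submodule.Quotient.mk_eq_zero]
      exact ⟨_, rfl⟩
    rw [hp] at hp2
    exact one_ne_zero (hf (hp2.trans (map_zero f).symm))
  have hdep : depth R (ModuleCat.of R L) = 1 := by
    refine le_antisymm (sInf_le ⟨1, rfl, h1⟩) (le_sInf ?_)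
    rintro _ ⟨i, rfl, hi⟩
    rcases i with _ | i
    · exact absurd h0 hi
    · exact_mod_cast Nat.succ_le_succ (Nat.zero_le i)
  rw [IsMCM, hdep, hd]; rfl

/-- a positive syzygy embeds in a finite free module. -/
lemma syz_emb (n : ℕ) : ∀ (W K : ModuleCat.{u} R), IsSyzygy R (n + 1) W K →
    ∃ (F : Type u) (_ : AddCommGroup F) (_ : Module R F) (f : W →ₗ[R] F),
      Module.Free R F ∧ Module.Finite R F ∧ Function.Injective f := by
  induction n with
  | zero =>
    rintro W K ⟨W', F, f, g, h1, h2, h3, ⟨e⟩⟩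
    exact ⟨F, _, _, f ∘ₗ e.toLinearMap, h1, h2, h3.1.comp e.injective⟩
  | succ n ih =>
    rintro W K ⟨W', F, f, g, h1, h2, h3, h4⟩
    exact ih W W' h4

/-- the induction step. -/
lemma step_lemma (M : Type u) [AddCommGroup M] [Module R M] [Module.Finite R M]
    {x : R} (hx : x ∈ nonZeroDivisors R)
    (H : ∀ (A : Type u) [AddCommGroup A] [Module R A] [Module.Finite R A], EV R A M 2)
    (K K' : ModuleCat.{u} R) [Module.Finite R K'] (a b n : ℕ) (ha : 1 ≤ a) (hn : 1 ≤ n)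
    (hs : ReducingStep R K K' a b n)
    (hK : ∃ (c : ℕ) (L : Type u) (_ : AddCommGroup L) (_ : Module R L), 1 ≤ c ∧
      (∀ l : L, x • l = 0 → l = 0) ∧ Nonempty (K ≃ₗ[R] ((Fin c → M) × L))) :
    ∃ (c : ℕ) (L : Type u) (_ : AddCommGroup L) (_ : Module R L), 1 ≤ c ∧
      (∀ l : L, x • l = 0 → l = 0) ∧ Nonempty (K' ≃ₗ[R] ((Fin c → M) × L)) := by
  obtain ⟨c, L, _, _, hc, hL, ⟨e⟩⟩ := hK
  obtain ⟨W, f, g, hW, hfg⟩ := hs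
  obtain ⟨n, rfl⟩ : ∃ i, n = i + 1 := ⟨n - 1, by omega⟩
  obtain ⟨F, _, _, i, hF1, hF2, hi⟩ := syz_emb n W K hW
  have hxF : ∀ v : F, x • v = 0 → v = 0 := by
    intro v hv
    let bs := Module.Free.chooseBasis R F
    refine bs.ext_elem fun j => ?_
    have := congrArg (fun w => bs.repr w j) hv
    simp only [map_smul, Finsupp.smul_apply, smul_eq_mul, map_zero, Finsupp.zero_apply] at this ⊢
    exact (mem_nonZeroDivisors_iff.1 hx).1 _ this
  have hxW : ∀ w : W, x • w = 0 → w = 0 := by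
    intro w hw
    refine hi ?_
    rw [map_zero]
    exact hxF _ (by rw [← map_smul, hw, map_zero])
  have hEW : EV R (Fin b → W) M 1 := by
    let ib : (Fin b → W) →ₗ[R] (Fin b → F) := LinearMap.pi fun j => i ∘ₗ LinearMap.proj j
    have hib : Function.Injective ib := fun u v huv => funext fun j => hi (congrFun huv j)
    exact EV.left (quot_shortExact ib hib) (EV.free 0) (H _)
  -- extend each coordinate projection
  have hext : ∀ jk : Fin a × Fin c, ∃ ψ : K' →ₗ[R] M, ∀ v : Fin a → K,
      ψ (f v) = (e (v jk.1)).1 jk.2 := by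
    intro jk
    obtain ⟨ψ, hψ⟩ := EV.extend hfg hEW
      (LinearMap.proj jk.2 ∘ₗ LinearMap.fst R _ _ ∘ₗ e.toLinearMap ∘ₗ LinearMap.proj jk.1)
    exact ⟨ψ, fun v => LinearMap.congr_fun hψ v⟩
  choose ψ hψ using hext
  let Φ : K' →ₗ[R] (Fin a × Fin c → M) := LinearMap.pi ψ
  let σ : (Fin a × Fin c → M) →ₗ[R] K' := f ∘ₗ LinearMap.pi fun j =>
    e.symm.toLinearMap ∘ₗ LinearMap.inl R (Fin c → M) L ∘ₗ
      LinearMap.pi fun k => LinearMap.proj (j, k)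
  have hΦσ : ∀ v, Φ (σ v) = v := by
    intro v
    funext jk
    simp [Φ, σ, hψ]
  have hxker : ∀ l : LinearMap.ker Φ, x • l = 0 → l = 0 := by
    rintro ⟨l, hl⟩ hxl
    have hxl' : x • l = 0 := congrArg Subtype.val hxl
    have hg : g l = 0 := funext fun j => hxW _ (by
      have := congrFun ((map_smul g x l).symm.trans ((congrArg g hxl').trans (map_zero g))) j
      exact this)
    obtain ⟨v, rfl⟩ := (hfg.2.2 l).1 hg
    have hv : v = 0 := by
      funext j
      apply e.injective
      rw [Pi.zero_apply, map_zero]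
      refine Prod.ext (funext fun k => ?_) (hL _ ?_)
      · exact (hψ (j, k) v).symm.trans (congrFun hl (j, k))
      · have h1 : x • v = 0 := hfg.1 (by rw [map_smul, hxl', map_zero])
        have h2 : x • v j = 0 := congrFun h1 j
        have h3 : x • e (v j) = 0 := by rw [← map_smul, h2, map_zero]
        exact congrArg Prod.snd h3
    apply Subtype.ext
    simp [hv]
  let E : K' ≃ₗ[R] (Fin a × Fin c → M) × LinearMap.ker Φ :=
    { toFun := fun y => (Φ y, ⟨y - σ (Φ y), by simp [hΦσ]⟩)
      invFun := fun z => σ z.1 + z.2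
      map_add' := fun y z => Prod.ext (map_add _ _ _) (Subtype.ext (by simp; abel))
      map_smul' := fun r z => Prod.ext (map_smul _ _ _) (Subtype.ext (by simp [smul_sub]))
      left_inv := fun y => by simp
      right_inv := fun z => by
        obtain ⟨z, w, hw⟩ := z
        have hw' : Φ w = 0 := hw
        refine Prod.ext ?_ (Subtype.ext ?_) <;> simp [hΦσ, hw'] }
  refine ⟨a * c, LinearMap.ker Φ, inferInstance, inferInstance, Nat.mul_pos ha hc, hxker,
    ⟨E.trans ((LinearEquiv.funCongrLeft R M finProdFinEquiv.symm).prodCongr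
      (LinearEquiv.refl R _))⟩⟩

end RingPart

theorem stmt14 (R : Type u) [CommRing R] [IsNoetherianRing R] [IsLocalRing R]
    (hd : ringKrullDim R = 1)
    (M : Type u) [AddCommGroup M] [Module R M] [Module.Finite R M] [Nontrivial M]
    (hdepth : depth R (ModuleCat.of R M) = 0)
    (hinj : ∃ n : ℕ, InjdimLE R n (ModuleCat.of R M))
    (r : ℕ) (K : Fin (r + 1) → ModuleCat.{u} R) (hK0 : K 0 = ModuleCat.of R M)
    (hfin : ∀ i, Module.Finite R (K i))
    (a b n : Fin r → ℕ) (habn : ∀ i, 1 ≤ a i ∧ 1 ≤ b i ∧ 1 ≤ n i)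
    (hseq : ∀ i : Fin r, ReducingStep R (K i.castSucc) (K i.succ) (a i) (b i) (n i)) :
    (∀ i : Fin (r + 1), ∃ (c : ℕ) (L : ModuleCat.{u} R), 1 ≤ c ∧ Module.Finite R L ∧
        (Subsingleton L ∨ IsMCM R L) ∧
        Nonempty ((K i : Type u) ≃ₗ[R] ((Fin c → M) × L))) ∧
      ∃ N : ModuleCat.{u} R, Nonempty ((K (Fin.last r) : Type u) ≃ₗ[R] (M × N)) := by
  obtain ⟨m, hm⟩ := hinj
  have H := EV_of_injdim m _ hm
  obtain ⟨x, hxm, hx⟩ := exists_regular hd M m H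
  have H2 := ext_two hd M m H hxm hx
  have key : ∀ i : Fin (r + 1), ∃ (c : ℕ) (L : Type u) (_ : AddCommGroup L) (_ : Module R L),
      1 ≤ c ∧ (∀ l : L, x • l = 0 → l = 0) ∧ Nonempty (K i ≃ₗ[R] ((Fin c → M) × L)) := by
    intro i
    induction i using Fin.induction with
    | zero =>
      rw [hK0]
      refine ⟨1, PUnit, inferInstance, inferInstance, le_rfl, fun _ _ => rfl, ⟨?_⟩⟩
      exact (LinearEquiv.funUnique (Fin 1) R M).symm.trans LinearEquiv.prodUnique.symm
    | succ i ih =>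
      have := hfin i.succ
      exact step_lemma M hx H2 _ _ _ _ _ (habn i).1 (habn i).2.2 (hseq i) ih
  have main : ∀ i : Fin (r + 1), ∃ (c : ℕ) (L : ModuleCat.{u} R), 1 ≤ c ∧ Module.Finite R L ∧
        (Subsingleton L ∨ IsMCM R L) ∧
        Nonempty ((K i : Type u) ≃ₗ[R] ((Fin c → M) × L)) := by
    intro i
    obtain ⟨c, L, _, _, hc, hL, ⟨e⟩⟩ := key i
    have := hfin i
    have hLf : Module.Finite R L := Module.Finite.of_surjective
      (LinearMap.snd R (Fin c → M) L ∘ₗ e.toLinearMap)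
      (Prod.snd_surjective.comp e.surjective)
    refine ⟨c, ModuleCat.of R L, hc, hLf, ?_, ⟨e⟩⟩
    rcases subsingleton_or_nontrivial L with h | h
    · exact Or.inl h
    · exact Or.inr (depth_lemma hd hxm hx L hL)
  refine ⟨main, ?_⟩
  obtain ⟨c, L, hc, _, _, ⟨e⟩⟩ := main (Fin.last r)
  obtain ⟨c, rfl⟩ : ∃ j, c = j + 1 := ⟨c - 1, by omega⟩
  have e2 : ((Fin (c + 1) → M) × L) ≃ₗ[R] (M × ((Fin c → M) × L)) :=
    ((Fin.consLinearEquiv R (fun _ : Fin (c + 1) => M)).symm.prodCongr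
      (LinearEquiv.refl R L)).trans (LinearEquiv.prodAssoc R M (Fin c → M) L)
  exact ⟨ModuleCat.of R ((Fin c → M) × L), ⟨e.trans e2⟩⟩
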